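/- arXiv:math/0004096 — 2 statements merged into one kernel-verified Lean document; each statement's English description precedes it below -/
import Mathlib

section
/- Let T = (T_n)_{n≥3} be a family of functions T_n : ℕ^n → ℚ such that: (i) each T_n is symmetric, i.e. invariant under permutations of its arguments; (ii) T_3(0,0,0) = 1; (iii) the string equation holds: for every n ≥ 3 and every (m_1,…,m_n) ∈ ℕ^n, T_{n+1}(0, m_1,…,m_n) = ∑_{j : m_j ≥ 1} T_n(m_1,…,m_j − 1,…,m_n). Then for every n ≥ 3 and every (m_1,…,m_n) ∈ ℕ^n with m_1 + ⋯ + m_n = n − 3 one has T_n(m_1,…,m_n) = (n−3)! / (m_1! ⋯ m_n!). -/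
/-- **Genus-zero intersection numbers are determined by the string equation.**
If a family `T` of symmetric functions `T n : ℕ^n → ℚ` (for `n ≥ 3`) satisfies
`T 3 (0,0,0) = 1` and the string equation, then for every `n ≥ 3` and every
tuple `(m_1,…,m_n)` with `m_1 + ⋯ + m_n = n - 3` one has
`T n (m_1,…,m_n) = (n-3)! / (m_1! ⋯ m_n!)`. -/
theorem genus_zero_intersection_numbers
    (T : ∀ n : ℕ, (Fin n → ℕ) → ℚ)
    (hsymm : ∀ n, 3 ≤ n → ∀ σ : Equiv.Perm (Fin n), ∀ m : Fin n → ℕ,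
      T n (m ∘ σ) = T n m)
    (hinit : T 3 (fun _ => 0) = 1)
    (hstring : ∀ n, 3 ≤ n → ∀ m : Fin n → ℕ,
      T (n + 1) (Fin.cons 0 m) =
        ∑ j : Fin n, if 1 ≤ m j then T n (Function.update m j (m j - 1)) else 0)
    (n : ℕ) (hn : 3 ≤ n) (m : Fin n → ℕ) (hm : ∑ i, m i = n - 3) :
    T n m = (Nat.factorial (n - 3) : ℚ) / ∏ i, (Nat.factorial (m i) : ℚ) := by
  induction n, hn using Nat.le_induction with
  | base =>
    have h0 : m = fun _ => 0 := by
      funext i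
      have := (Finset.sum_eq_zero_iff.mp hm) i (Finset.mem_univ i)
      exact this
    subst h0
    simp [hinit]
  | succ n hn ih =>
    have key : ∀ p : Fin n → ℕ, ∑ i, p i = n + 1 - 3 →
        T (n + 1) (Fin.cons 0 p) =
          (Nat.factorial (n + 1 - 3) : ℚ) / ∏ i, (Nat.factorial (p i) : ℚ) := by
      intro p hp
      rw [hstring n hn p]
      have hterm : ∀ j : Fin n,
          (if 1 ≤ p j then T n (Function.update p j (p j - 1)) else 0) =
            (p j : ℚ) * ((Nat.factorial (n - 3) : ℚ) / ∏ i, (Nat.factorial (p i) : ℚ)) := by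
        intro j
        split_ifs with hj
        · obtain ⟨k, hk⟩ : ∃ k, p j = k + 1 := ⟨p j - 1, by omega⟩
          have hs := Finset.sum_update_of_mem (Finset.mem_univ j) p (p j - 1)
          have hs2 := Finset.add_sum_erase Finset.univ p (Finset.mem_univ j)
          rw [Finset.sdiff_singleton_eq_erase] at hs
          rw [ih _ (by omega)]
          have e1 := Finset.mul_prod_erase Finset.univ
            (fun i => (Nat.factorial (p i) : ℚ)) (Finset.mem_univ j)
          have e2 := Finset.mul_prod_erase Finset.univ
            (fun i => (Nat.factorial (Function.update p j (p j - 1) i) : ℚ)) (Finset.mem_univ j)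
          have e3 : ∏ i ∈ Finset.univ.erase j,
              (Nat.factorial (Function.update p j (p j - 1) i) : ℚ) =
              ∏ i ∈ Finset.univ.erase j, (Nat.factorial (p i) : ℚ) := by
            apply Finset.prod_congr rfl
            intro i hi
            rw [Function.update_of_ne (Finset.ne_of_mem_erase hi)]
          rw [← e1, ← e2, e3]
          have hne : ∏ i ∈ Finset.univ.erase j, (Nat.factorial (p i) : ℚ) ≠ 0 :=
            Finset.prod_ne_zero_iff.mpr fun i _ => by positivity
          have hk0 : (Nat.factorial k : ℚ) ≠ 0 := by positivity
          have hk1 : (k : ℚ) + 1 ≠ 0 := by positivity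
          simp only [Function.update_self, hk, Nat.add_sub_cancel, Nat.factorial_succ]
          push_cast
          field_simp
        · have : p j = 0 := by omega
          simp [this]
      rw [Finset.sum_congr rfl fun j _ => hterm j, ← Finset.sum_mul, ← Nat.cast_sum, hp]
      have : n + 1 - 3 = (n - 3) + 1 := by omega
      rw [this, Nat.factorial_succ]
      push_cast
      ring
    obtain ⟨k, hk⟩ : ∃ k, m k = 0 := by
      by_contra! h
      have : ∑ _i : Fin (n + 1), 1 ≤ ∑ i, m i :=
        Finset.sum_le_sum fun i _ => Nat.one_le_iff_ne_zero.mpr (h i)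
      simp at this
      omega
    have hq : m ∘ Equiv.swap 0 k = Fin.cons 0 (Fin.tail (m ∘ Equiv.swap 0 k)) := by
      conv_lhs => rw [← Fin.cons_self_tail (m ∘ Equiv.swap 0 k)]
      simp [hk]
    have hsum : ∑ i, (m ∘ Equiv.swap 0 k) i = n + 1 - 3 := by
      rw [← hm]
      exact Equiv.sum_comp (Equiv.swap 0 k) m
    have hprod : ∏ i, (Nat.factorial ((m ∘ Equiv.swap 0 k) i) : ℚ) =
        ∏ i, (Nat.factorial (m i) : ℚ) :=
      Equiv.prod_comp (Equiv.swap 0 k) fun i => (Nat.factorial (m i) : ℚ)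
    rw [← hsymm (n + 1) (by omega) (Equiv.swap 0 k) m, ← hprod]
    generalize Fin.tail (m ∘ Equiv.swap 0 k) = p at hq
    rw [hq] at hsum ⊢
    rw [key p (by simpa [Fin.sum_univ_succ] using hsum)]
    simp [Fin.prod_univ_succ]
end

section
/- Let T = (T_n)_{n≥1} be a family of functions T_n : ℕ^n → ℚ such that: (i) each T_n is symmetric, i.e. invariant under permutations of its arguments; (ii) T_1(1) = 1/24; (iii) the string equation holds: for every n ≥ 1 and every (m_1,…,m_n) ∈ ℕ^n, T_{n+1}(0, m_1,…,m_n) = ∑_{j : m_j ≥ 1} T_n(m_1,…,m_j − 1,…,m_n); (iv) the dilaton equation holds: for every n ≥ 1 and every (m_1,…,m_n) ∈ ℕ^n, T_{n+1}(1, m_1,…,m_n) = n · T_n(m_1,…,m_n). Then for every n ≥ 1 and every (m_1,…,m_n) ∈ ℕ^n with m_1 + ⋯ + m_n = n one has T_n(m_1,…,m_n) = α_n(m_1,…,m_n), where α_r(y_1,…,y_r) = (1/(24 · y_1!⋯y_r!)) · ( r! − ∑_{i=2}^{r} (i−2)! (r−i)! e_i(y_1,…,y_r) ) and e_i denotes the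 i-th elementary symmetric polynomial e_i(y) = ∑_{S ⊆ {1,…,r}, |S| = i} ∏_{l ∈ S} y_l. -/
open Finset

/-- The `i`-th elementary symmetric polynomial of `y_1, …, y_r ∈ ℕ`, as a rational
number: `e_i(y) = ∑_{S ⊆ {1,…,r}, |S| = i} ∏_{l ∈ S} y_l`. -/
def esymmQ (r i : ℕ) (y : Fin r → ℕ) : ℚ :=
  ∑ S ∈ Finset.powersetCard i (Finset.univ : Finset (Fin r)), ∏ l ∈ S, (y l : ℚ)

/-- `α_r(y_1,…,y_r) = (1/(24 · y_1!⋯y_r!)) · ( r! − ∑_{i=2}^{r} (i−2)! (r−i)! e_i(y) )`. -/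
def alphaCoeff (r : ℕ) (y : Fin r → ℕ) : ℚ :=
  (1 / (24 * ∏ l, (Nat.factorial (y l) : ℚ))) *
    ((Nat.factorial r : ℚ) -
      ∑ i ∈ Finset.Icc 2 r,
        (Nat.factorial (i - 2) : ℚ) * (Nat.factorial (r - i) : ℚ) * esymmQ r i y)

theorem esymmQ_perm (r i : ℕ) (y : Fin r → ℕ) (σ : Equiv.Perm (Fin r)) :
    esymmQ r i (y ∘ σ) = esymmQ r i y := by
  unfold esymmQ
  have h : (Finset.univ : Finset (Fin r)) = Finset.univ.map σ.toEmbedding := by simp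
  conv_rhs => rw [h, Finset.powersetCard_map, Finset.sum_map]
  refine Finset.sum_congr rfl fun S _ => ?_
  simp [Finset.mapEmbedding_apply, Finset.prod_map]

theorem alphaCoeff_perm (r : ℕ) (y : Fin r → ℕ) (σ : Equiv.Perm (Fin r)) :
    alphaCoeff r (y ∘ σ) = alphaCoeff r y := by
  unfold alphaCoeff
  simp only [esymmQ_perm, Function.comp_apply]
  rw [Equiv.prod_comp σ (fun l => (Nat.factorial (y l) : ℚ))]

theorem esymmQ_cons_zero (n i : ℕ) (m : Fin n → ℕ) :
    esymmQ (n + 1) i (Fin.cons 0 m) = esymmQ n i m := by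
  unfold esymmQ
  have h : ∑ S ∈ Finset.powersetCard i (Finset.univ.map (Fin.succEmb n)),
      ∏ l ∈ S, (((Fin.cons 0 m : Fin (n + 1) → ℕ) l : ℕ) : ℚ) =
      ∑ S ∈ Finset.powersetCard i (Finset.univ : Finset (Fin (n + 1))),
      ∏ l ∈ S, (((Fin.cons 0 m : Fin (n + 1) → ℕ) l : ℕ) : ℚ) := by
    apply Finset.sum_subset (Finset.powersetCard_mono (Finset.subset_univ _))
    intro S hS hS'
    have h0 : (0 : Fin (n + 1)) ∈ S := by
      by_contra h0
      apply hS'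
      rw [Finset.mem_powersetCard] at hS ⊢
      refine ⟨fun x hx => ?_, hS.2⟩
      have hx0 : x ≠ 0 := fun h => h0 (h ▸ hx)
      obtain ⟨z, rfl⟩ := Fin.exists_succ_eq.2 hx0
      simp
    exact Finset.prod_eq_zero h0 (by simp)
  rw [← h, Finset.powersetCard_map, Finset.sum_map]
  refine Finset.sum_congr rfl fun S _ => ?_
  simp [Finset.mapEmbedding_apply, Finset.prod_map]

theorem esymmQ_big (n : ℕ) (m : Fin n → ℕ) : esymmQ n (n + 1) m = 0 := by
  unfold esymmQ
  rw [Finset.powersetCard_eq_empty.2 (by simp)]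
  simp

theorem prod_update (n : ℕ) (m : Fin n → ℕ) (S : Finset (Fin n)) (j : Fin n) :
    (m j : ℚ) * ∏ l ∈ S, ((Function.update m j (m j - 1) l : ℕ) : ℚ) =
      (m j : ℚ) * (∏ l ∈ S, (m l : ℚ)) - if j ∈ S then ∏ l ∈ S, (m l : ℚ) else 0 := by
  have hoff : ∀ U : Finset (Fin n), j ∉ U →
      ∏ l ∈ U, ((Function.update m j (m j - 1) l : ℕ) : ℚ) = ∏ l ∈ U, (m l : ℚ) := by
    intro U hU
    refine Finset.prod_congr rfl fun l hl => ?_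
    have hne : l ≠ j := fun h => hU (h ▸ hl)
    rw [Function.update_of_ne hne]
  by_cases hj : j ∈ S
  · rw [if_pos hj, ← Finset.mul_prod_erase S _ hj, ← Finset.mul_prod_erase S _ hj,
      hoff _ (Finset.notMem_erase j S), Function.update_self]
    rcases Nat.eq_zero_or_pos (m j) with h | h
    · simp [h]
    · rw [Nat.cast_sub h]
      push_cast
      ring
  · rw [if_neg hj, hoff S hj, sub_zero]

theorem esymmQ_update (n i : ℕ) (m : Fin n → ℕ) (hm : ∑ j, m j = n + 1) :
    ∑ j, (m j : ℚ) * esymmQ n i (Function.update m j (m j - 1)) =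
      ((n : ℚ) + 1 - i) * esymmQ n i m := by
  unfold esymmQ
  simp_rw [Finset.mul_sum]
  rw [Finset.sum_comm]
  refine Finset.sum_congr rfl fun S hS => ?_
  simp_rw [prod_update]
  rw [Finset.sum_sub_distrib, ← Finset.sum_mul, ← Nat.cast_sum, hm, Finset.sum_ite_mem,
    Finset.univ_inter, Finset.sum_const, (Finset.mem_powersetCard.1 hS).2]
  simp
  ring

theorem factorial_update (n : ℕ) (m : Fin n → ℕ) (j : Fin n) (hj : 1 ≤ m j) :
    (∏ l, (Nat.factorial (m l) : ℚ)) =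
      m j * ∏ l, (Nat.factorial (Function.update m j (m j - 1) l) : ℚ) := by
  rw [← Finset.mul_prod_erase Finset.univ _ (Finset.mem_univ j),
    ← Finset.mul_prod_erase Finset.univ
      (fun l => (Nat.factorial (Function.update m j (m j - 1) l) : ℚ)) (Finset.mem_univ j),
    Function.update_self, ← mul_assoc]
  congr 1
  · rw [← Nat.cast_mul, Nat.mul_factorial_pred (by omega)]
  · refine Finset.prod_congr rfl fun l hl => ?_
    rw [Function.update_of_ne (Finset.ne_of_mem_erase hl)]

theorem alphaCoeff_string (n : ℕ) (hn : 1 ≤ n) (m : Fin n → ℕ) (hm : ∑ j, m j = n + 1) :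
    alphaCoeff (n + 1) (Fin.cons 0 m) =
      ∑ j : Fin n, if 1 ≤ m j then alphaCoeff n (Function.update m j (m j - 1)) else 0 := by
  have hterm : ∀ j : Fin n,
      (if 1 ≤ m j then alphaCoeff n (Function.update m j (m j - 1)) else 0) =
      (1 / (24 * ∏ l, (Nat.factorial (m l) : ℚ))) * ((m j : ℚ) * (Nat.factorial n : ℚ) -
        ∑ i ∈ Finset.Icc 2 n, (Nat.factorial (i - 2) : ℚ) * (Nat.factorial (n - i) : ℚ) *
          ((m j : ℚ) * esymmQ n i (Function.update m j (m j - 1)))) := by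
    intro j
    split_ifs with h
    · have hs : ∑ i ∈ Finset.Icc 2 n, (Nat.factorial (i - 2) : ℚ) * (Nat.factorial (n - i) : ℚ) *
          ((m j : ℚ) * esymmQ n i (Function.update m j (m j - 1))) =
          m j * ∑ i ∈ Finset.Icc 2 n, (Nat.factorial (i - 2) : ℚ) * (Nat.factorial (n - i) : ℚ) *
          esymmQ n i (Function.update m j (m j - 1)) := by
        rw [Finset.mul_sum]
        exact Finset.sum_congr rfl fun i _ => by ring
      rw [hs, factorial_update n m j h, alphaCoeff]
      have h1 : (m j : ℚ) ≠ 0 := by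
        have : m j ≠ 0 := by omega
        exact_mod_cast this
      have h2 : (∏ l, (Nat.factorial (Function.update m j (m j - 1) l) : ℚ)) ≠ 0 :=
        Finset.prod_ne_zero_iff.2 fun l _ => by positivity
      field_simp
    · have : m j = 0 := by omega
      simp [this]
  simp_rw [hterm]
  rw [← Finset.mul_sum, Finset.sum_sub_distrib, ← Finset.sum_mul, ← Nat.cast_sum, hm,
    Finset.sum_comm]
  simp_rw [← Finset.mul_sum, esymmQ_update n _ m hm]
  unfold alphaCoeff
  simp_rw [esymmQ_cons_zero]
  rw [Fin.prod_univ_succ]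
  simp only [Fin.cons_zero, Fin.cons_succ, Nat.factorial_zero, Nat.cast_one, one_mul]
  rw [Finset.sum_Icc_succ_top (by omega), esymmQ_big, mul_zero, add_zero,
    Nat.factorial_succ, Nat.cast_mul]
  congr 2
  refine Finset.sum_congr rfl fun i hi => ?_
  have hi := (Finset.mem_Icc.1 hi).2
  rw [Nat.succ_sub hi, Nat.factorial_succ]
  push_cast [Nat.cast_sub hi]
  ring

theorem sum_telescope (n : ℕ) :
    ∑ i ∈ Finset.Icc 2 (n + 1), (1 : ℚ) / ((i : ℚ) * (i - 1)) = 1 - 1 / ((n : ℚ) + 1) := by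
  induction n with
  | zero => simp
  | succ k ih =>
    rw [Finset.sum_Icc_succ_top (by omega), ih]
    push_cast
    have : (k : ℚ) + 1 ≠ 0 := by positivity
    have : (k : ℚ) + 1 + 1 ≠ 0 := by positivity
    rw [add_sub_cancel_right]
    field_simp
    ring

theorem alphaCoeff_ones (n : ℕ) :
    alphaCoeff (n + 1) (fun _ => 1) = (Nat.factorial n : ℚ) / 24 := by
  have h : ∀ i ∈ Finset.Icc 2 (n + 1),
      (Nat.factorial (i - 2) : ℚ) * (Nat.factorial (n + 1 - i) : ℚ) *
        esymmQ (n + 1) i (fun _ => 1) =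
      (Nat.factorial (n + 1) : ℚ) * (1 / ((i : ℚ) * (i - 1))) := by
    intro i hi
    obtain ⟨h2, hi⟩ := Finset.mem_Icc.1 hi
    have he : esymmQ (n + 1) i (fun _ => 1) = ((n + 1).choose i : ℚ) := by
      simp [esymmQ]
    rw [he, ← Nat.choose_mul_factorial_mul_factorial hi]
    obtain ⟨k, rfl⟩ := Nat.exists_eq_add_of_le' h2
    have : (k : ℚ) + 2 ≠ 0 := by positivity
    have : (k : ℚ) + 1 ≠ 0 := by positivity
    have h3 : (k : ℚ) + 2 - 1 = k + 1 := by ring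
    simp only [Nat.add_sub_cancel, Nat.factorial_succ (k + 1), Nat.factorial_succ k]
    push_cast
    rw [h3]
    field_simp
    ring
  unfold alphaCoeff
  rw [Finset.sum_congr rfl h, ← Finset.mul_sum, sum_telescope, Nat.factorial_succ]
  have : (n : ℚ) + 1 ≠ 0 := by positivity
  simp
  field_simp
  ring

/-- **Genus-one intersection numbers are determined by the string and dilaton
equations.**  If a family `T` of symmetric functions `T n : ℕ^n → ℚ` (for `n ≥ 1`)
satisfies `T 1 (1) = 1/24`, the string equation and the dilaton equation, then for
every `n ≥ 1` and every tuple `(m_1,…,m_n)` with `m_1 + ⋯ + m_n = n` one has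
`T n (m_1,…,m_n) = α_n(m_1,…,m_n)`. -/
theorem genus_one_intersection_numbers
    (T : ∀ n : ℕ, (Fin n → ℕ) → ℚ)
    (hsymm : ∀ n, 1 ≤ n → ∀ σ : Equiv.Perm (Fin n), ∀ m : Fin n → ℕ,
      T n (m ∘ σ) = T n m)
    (hinit : T 1 (fun _ => 1) = 1 / 24)
    (hstring : ∀ n, 1 ≤ n → ∀ m : Fin n → ℕ,
      T (n + 1) (Fin.cons 0 m) =
        ∑ j : Fin n, if 1 ≤ m j then T n (Function.update m j (m j - 1)) else 0)
    (hdilaton : ∀ n, 1 ≤ n → ∀ m : Fin n → ℕ,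
      T (n + 1) (Fin.cons 1 m) = (n : ℚ) * T n m)
    (n : ℕ) (hn : 1 ≤ n) (m : Fin n → ℕ) (hm : ∑ i, m i = n) :
    T n m = alphaCoeff n m := by
  induction n, hn using Nat.le_induction with
  | base =>
    have h : m = fun _ => 1 := by
      funext i
      rw [Subsingleton.elim i 0]
      simpa using hm
    rw [h, hinit, alphaCoeff_ones 0]
    simp
  | succ n hn ih =>
    by_cases hz : ∃ i, m i = 0
    · obtain ⟨i, hi⟩ := hz
      rw [← hsymm (n + 1) (by omega) (Equiv.swap 0 i) m,
        ← alphaCoeff_perm (n + 1) m (Equiv.swap 0 i)]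
      have hsum : ∑ j, (m ∘ Equiv.swap 0 i) j = n + 1 := by
        exact (Equiv.sum_comp (Equiv.swap 0 i) m).trans hm
      have h0 : (m ∘ Equiv.swap 0 i) 0 = 0 := by simp [hi]
      generalize m ∘ Equiv.swap 0 i = y at hsum h0
      have hy : y = Fin.cons 0 (Fin.tail y) := by
        rw [← h0, Fin.cons_self_tail]
      have ht : ∑ j, Fin.tail y j = n + 1 := by
        rw [Fin.sum_univ_succ, h0, zero_add] at hsum
        exact hsum
      rw [hy, hstring n hn, alphaCoeff_string n hn _ ht]
      refine Finset.sum_congr rfl fun j _ => ?_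
      split_ifs with hj
      · apply ih
        have h1 := Finset.sum_update_of_mem (Finset.mem_univ j) (Fin.tail y) (Fin.tail y j - 1)
        have h2 := Finset.add_sum_erase Finset.univ (Fin.tail y) (Finset.mem_univ j)
        rw [Finset.sdiff_singleton_eq_erase] at h1
        omega
      · rfl
    · push Not at hz
      have hone : ∀ i, m i = 1 := by
        have h1 : ∀ i ∈ Finset.univ, 1 ≤ m i := fun i _ => Nat.one_le_iff_ne_zero.2 (hz i)
        have h2 := (Finset.sum_eq_sum_iff_of_le h1).1 (by simp [hm])
        exact fun i => (h2 i (Finset.mem_univ i)).symm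
      have hm1 : m = Fin.cons 1 (fun _ => 1) := by
        funext i
        rw [hone i]
        refine Fin.cases ?_ (fun j => ?_) i <;> simp
      have hm2 : m = fun _ => 1 := funext hone
      conv_rhs => rw [hm2]
      rw [hm1, hdilaton n hn, ih (fun _ => 1) (by simp), alphaCoeff_ones]
      obtain ⟨k, rfl⟩ := Nat.exists_eq_add_of_le' hn
      rw [alphaCoeff_ones, Nat.factorial_succ]
      push_cast
      ring
end
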